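/- Suppose the regression rank score process â(·) is piecewise linear on [0,1] and α ∈ (0,1) is a continuity point of the regression quantile trajectory β̂*_n(·) at which â(·) is differentiable. Then the averaged regression α-quantile satisfies the identity B̄_n(α) = (1/n) Σ_{i=1}^n x_i*ᵀ β̂*_n(α) = −(1/n) Σ_{i=1}^n Y_i â′_i(α), where â′_i(α) = (d/dα) â_i(α). -/

import Mathlib

/-- The quantile check loss `ρ_α(z) = α z⁺ + (1-α) z⁻`. -/
noncomputable def checkLoss (α z : ℝ) : ℝ := α * max z 0 + (1 - α) * max (-z) 0

/-- `b` is a regression α-quantile for responses `Y` and design `X`: a minimizer of the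
check-loss criterion. -/
def IsRegQuantile {n p : ℕ} (X : Matrix (Fin n) (Fin (p + 1)) ℝ) (Y : Fin n → ℝ)
    (α : ℝ) (b : Fin (p + 1) → ℝ) : Prop :=
  ∀ c : Fin (p + 1) → ℝ,
    ∑ i : Fin n, checkLoss α (Y i - ∑ j : Fin (p + 1), X i j * b j) ≤
      ∑ i : Fin n, checkLoss α (Y i - ∑ j : Fin (p + 1), X i j * c j)

/-- `g` is piecewise linear on `[0,1]`: there is a finite partition
`0 = t 0 < t 1 < … < t m = 1` of `[0,1]` on each piece of which `g` is affine. -/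
def PiecewiseLinearOn01 (g : ℝ → ℝ) : Prop :=
  ∃ (m : ℕ) (t : Fin (m + 1) → ℝ), StrictMono t ∧ t 0 = 0 ∧ t (Fin.last m) = 1 ∧
    ∀ k : Fin m, ∃ c d : ℝ, ∀ u ∈ Set.Icc (t k.castSucc) (t k.succ), g u = c * u + d

lemma checkLoss_eq_pos_part (α z : ℝ) : checkLoss α z = max z 0 - (1 - α) * z := by
  unfold checkLoss
  rcases le_total z 0 with h | h
  · rw [max_eq_right h, max_eq_left (by linarith)]; ring
  · rw [max_eq_left h, max_eq_right (by linarith)]; ring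

lemma eventually_pos_part (r w : ℝ) : ∃ a : ℝ,
    ((if 0 < r then 1 else 0) ≤ a ∧ a ≤ (if r < 0 then 0 else 1)) ∧ a * r = max r 0 ∧
    ∀ᶠ t in nhdsWithin (0 : ℝ) (Set.Ioi 0), max (r - t * w) 0 = a * (r - t * w) := by
  have hc : Filter.Tendsto (fun t : ℝ => r - t * w) (nhdsWithin (0 : ℝ) (Set.Ioi 0)) (nhds r) := by
    have : ContinuousAt (fun t : ℝ => r - t * w) 0 := by fun_prop
    have h := this.tendsto
    simp only [zero_mul, sub_zero] at h
    exact h.mono_left nhdsWithin_le_nhds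
  rcases lt_trichotomy r 0 with h | h | h
  · refine ⟨0, ?_, ?_, ?_⟩
    · simp [h, not_lt.2 h.le]
    · simp [h.le]
    · filter_upwards [hc.eventually (gt_mem_nhds h)] with t ht
      simp [max_eq_right ht.le]
  · subst h
    by_cases hw : w < 0
    · refine ⟨1, by simp, by simp, ?_⟩
      filter_upwards [self_mem_nhdsWithin] with t ht
      have ht : 0 < t := ht
      rw [max_eq_left (by nlinarith)]; ring
    · refine ⟨0, by simp, by simp, ?_⟩
      filter_upwards [self_mem_nhdsWithin] with t ht
      have ht : 0 < t := ht
      rw [max_eq_right (by nlinarith)]; ring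
  · refine ⟨1, ?_, ?_, ?_⟩
    · simp [h, not_lt.2 h.le]
    · simp [h.le]
    · filter_upwards [hc.eventually (lt_mem_nhds h)] with t ht
      rw [max_eq_left ht.le]; ring

/-- Strong duality / complementary slackness at a regression quantile. -/
lemma exists_dual_certificate {n p : ℕ} (X : Matrix (Fin n) (Fin (p + 1)) ℝ) (Y : Fin n → ℝ)
    (α : ℝ) (b : Fin (p + 1) → ℝ) (hb : IsRegQuantile X Y α b) :
    ∃ a : Fin n → ℝ, (∀ i, a i ∈ Set.Icc (0 : ℝ) 1) ∧
      (∀ j, ∑ i, X i j * a i = (1 - α) * ∑ i, X i j) ∧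
      ∀ i, a i * (Y i - ∑ j, X i j * b j) = max (Y i - ∑ j, X i j * b j) 0 := by
  set r : Fin n → ℝ := fun i => Y i - ∑ j, X i j * b j with hr
  let lo : Fin n → ℝ := fun i => if 0 < r i then 1 else 0
  let hi : Fin n → ℝ := fun i => if r i < 0 then 0 else 1
  let L : (Fin n → ℝ) →ₗ[ℝ] (Fin (p + 1) → ℝ) := Matrix.toLin' X.transpose
  have hL : ∀ a j, L a j = ∑ i, X i j * a i := by
    intro a j
    simp [L, Matrix.mulVec, dotProduct]
  by_cases hmem : (fun j => (1 - α) * ∑ i, X i j) ∈ L '' Set.Icc lo hi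
  · obtain ⟨a, ⟨h1, h2⟩, h3⟩ := hmem
    refine ⟨a, ?_, ?_, ?_⟩
    · intro i
      have h1 := h1 i
      have h2 := h2 i
      simp only [lo, hi] at h1 h2
      constructor <;> split_ifs at h1 h2 <;> linarith
    · intro j
      rw [← hL, h3]
    · intro i
      have h1 := h1 i
      have h2 := h2 i
      simp only [lo, hi] at h1 h2
      change a i * r i = max (r i) 0
      rcases lt_trichotomy (r i) 0 with h | h | h
      · rw [if_pos h] at h2
        rw [if_neg (not_lt.2 h.le)] at h1
        rw [le_antisymm h2 h1, max_eq_right h.le, zero_mul]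
      · simp [h]
      · rw [if_pos h] at h1
        rw [if_neg (not_lt.2 h.le)] at h2
        rw [le_antisymm h2 h1, max_eq_left h.le, one_mul]
  · exfalso
    have hconv : Convex ℝ (L '' Set.Icc lo hi) := (convex_Icc lo hi).linear_image L
    have hcl : IsClosed (L '' Set.Icc lo hi) :=
      (isCompact_Icc.image L.continuous_of_finiteDimensional).isClosed
    obtain ⟨f, u, hfu, hf⟩ := geometric_hahn_banach_point_closed hconv hcl hmem
    let v : Fin (p + 1) → ℝ := fun j => f (Pi.single j 1)
    have hfv : ∀ y, f y = ∑ j, y j * v j := by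
      intro y
      conv_lhs => rw [pi_eq_sum_univ' y]
      simp [v, map_sum]
    let w : Fin n → ℝ := fun i => ∑ j, X i j * v j
    choose a ha1 ha2 ha3 using fun i => eventually_pos_part (r i) (w i)
    have hlt : (1 - α) * ∑ i, w i < ∑ i, a i * w i := by
      have h := hfu.trans (hf (L a) ⟨a, ⟨fun i => (ha1 i).1, fun i => (ha1 i).2⟩, rfl⟩)
      rw [hfv, hfv] at h
      have e1 : ∑ j, ((1 - α) * ∑ i, X i j) * v j = (1 - α) * ∑ i, w i := by
        simp only [w]
        rw [Finset.sum_comm, Finset.mul_sum]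
        refine Finset.sum_congr rfl fun j _ => ?_
        rw [mul_assoc, Finset.sum_mul]
      have e2 : ∑ j, L a j * v j = ∑ i, a i * w i := by
        simp only [w, hL, Finset.mul_sum, Finset.sum_mul]
        rw [Finset.sum_comm]
        refine Finset.sum_congr rfl fun i _ => Finset.sum_congr rfl fun j _ => ?_
        ring
      rwa [e1, e2] at h
    obtain ⟨t, ht, ht0⟩ := ((Filter.eventually_all.2 ha3).and self_mem_nhdsWithin).exists
    have ht0 : 0 < t := ht0
    have hbt := hb (fun j => b j + t * v j)
    have e3 : ∀ i, Y i - ∑ j, X i j * (b j + t * v j) = r i - t * w i := by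
      intro i
      simp only [hr, w, Finset.mul_sum, mul_add, Finset.sum_add_distrib]
      have : ∑ j, X i j * (t * v j) = ∑ j, t * (X i j * v j) :=
        Finset.sum_congr rfl fun j _ => by ring
      rw [this]; ring
    have e4 : ∑ i, checkLoss α (r i) = ∑ i, (a i * r i - (1 - α) * r i) :=
      Finset.sum_congr rfl fun i _ => by rw [checkLoss_eq_pos_part, ha2]
    have e5 : ∑ i, checkLoss α (r i - t * w i) =
        ∑ i, (a i * r i - (1 - α) * r i) + t * ((1 - α) * ∑ i, w i - ∑ i, a i * w i) := by
      rw [Finset.mul_sum, ← Finset.sum_sub_distrib, Finset.mul_sum, ← Finset.sum_add_distrib]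
      refine Finset.sum_congr rfl fun i _ => ?_
      rw [checkLoss_eq_pos_part, ht i]; ring
    simp only [e3] at hbt
    change ∑ i, checkLoss α (r i) ≤ _ at hbt
    rw [e4, e5] at hbt
    nlinarith

/-- if the regression rank score process `â(·)` (optimal solution of the dual
program at every `α ∈ [0,1]`) is piecewise linear on `[0,1]`, and `α ∈ (0,1)` is a
continuity point of the regression quantile trajectory `β̂*(·)` at which `â(·)` is
differentiable with derivative `â′(α)`, then the averaged regression α-quantile satisfies
`B̄_n(α) = (1/n) ∑ i x_i*ᵀ β̂*(α) = -(1/n) ∑ i Y_i â′_i(α)`. -/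
theorem averaged_quantile_dual_identity {n p : ℕ} (hn : 0 < n)
    (X : Matrix (Fin n) (Fin (p + 1)) ℝ)
    (hones : ∀ i : Fin n, X i 0 = 1)
    (Y : Fin n → ℝ)
    (a : ℝ → Fin n → ℝ)
    (hfeas : ∀ α ∈ Set.Icc (0 : ℝ) 1, (∀ i, a α i ∈ Set.Icc (0 : ℝ) 1) ∧
      ∀ j : Fin (p + 1), ∑ i : Fin n, X i j * a α i = (1 - α) * ∑ i : Fin n, X i j)
    (hopt : ∀ α ∈ Set.Icc (0 : ℝ) 1, ∀ a' : Fin n → ℝ,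
      ((∀ i, a' i ∈ Set.Icc (0 : ℝ) 1) ∧
        ∀ j : Fin (p + 1), ∑ i : Fin n, X i j * a' i = (1 - α) * ∑ i : Fin n, X i j) →
      ∑ i : Fin n, Y i * a' i ≤ ∑ i : Fin n, Y i * a α i)
    (hpl : ∀ i : Fin n, PiecewiseLinearOn01 fun s => a s i)
    (bhat : ℝ → Fin (p + 1) → ℝ)
    (hbhat : ∀ α ∈ Set.Ioo (0 : ℝ) 1, IsRegQuantile X Y α (bhat α))
    (α : ℝ) (hα : α ∈ Set.Ioo (0 : ℝ) 1)
    (hcont : ContinuousAt bhat α)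
    (d : Fin n → ℝ) (hd : ∀ i, HasDerivAt (fun s => a s i) (d i) α) :
    (1 / (n : ℝ)) * ∑ i : Fin n, ∑ j : Fin (p + 1), X i j * bhat α j =
      -(1 / (n : ℝ)) * ∑ i : Fin n, Y i * d i := by
  set r : Fin n → ℝ := fun i => Y i - ∑ j, X i j * bhat α j with hr
  set S : ℝ := ∑ i : Fin n, ∑ j : Fin (p + 1), X i j * bhat α j with hS
  have key : ∀ (s : ℝ) (a' : Fin n → ℝ),
      (∀ j : Fin (p + 1), ∑ i : Fin n, X i j * a' i = (1 - s) * ∑ i : Fin n, X i j) →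
      ∑ i, Y i * a' i = ∑ i, a' i * r i + (1 - s) * S := by
    intro s a' h
    have e1 : ∑ i, a' i * ∑ j, X i j * bhat α j = (1 - s) * S := by
      have : ∑ i, a' i * ∑ j, X i j * bhat α j = ∑ j, (∑ i, X i j * a' i) * bhat α j := by
        simp only [Finset.mul_sum, Finset.sum_mul]
        rw [Finset.sum_comm]
        refine Finset.sum_congr rfl fun i _ => Finset.sum_congr rfl fun j _ => ?_
        ring
      rw [this, hS, Finset.sum_comm, Finset.mul_sum]
      refine Finset.sum_congr rfl fun j _ => ?_
      rw [h, mul_assoc, Finset.sum_mul]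
    rw [← e1, ← Finset.sum_add_distrib]
    refine Finset.sum_congr rfl fun i _ => ?_
    simp only [hr]; ring
  obtain ⟨a0, h01, h02, h03⟩ := exists_dual_certificate X Y α (bhat α) (hbhat α hα)
  have hle : ∑ i, max (r i) 0 + (1 - α) * S ≤ ∑ i, Y i * a α i := by
    have h := hopt α ⟨hα.1.le, hα.2.le⟩ a0 ⟨h01, h02⟩
    rw [key α a0 h02] at h
    rwa [Finset.sum_congr rfl fun i _ => h03 i] at h
  have hup : ∀ s ∈ Set.Ioo (0 : ℝ) 1, ∑ i, Y i * a s i ≤ ∑ i, max (r i) 0 + (1 - s) * S := by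
    intro s hs
    obtain ⟨h1, h2⟩ := hfeas s ⟨hs.1.le, hs.2.le⟩
    rw [key s (a s) h2]
    gcongr with i
    rcases le_total (r i) 0 with h | h
    · rw [max_eq_right h]; exact mul_nonpos_of_nonneg_of_nonpos (h1 i).1 h
    · rw [max_eq_left h]; exact mul_le_of_le_one_left h (h1 i).2
  have hmax : IsLocalMax (fun s => ∑ i, Y i * a s i - (1 - s) * S) α := by
    filter_upwards [isOpen_Ioo.mem_nhds hα] with s hs
    have := hup s hs
    linarith
  have hder : HasDerivAt (fun s => ∑ i, Y i * a s i - (1 - s) * S)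
      (∑ i, Y i * d i - (-1) * S) α := by
    refine HasDerivAt.sub ?_ ?_
    · exact HasDerivAt.fun_sum fun i _ => (hd i).const_mul (Y i)
    · exact ((hasDerivAt_id α).const_sub 1).mul_const S
  have h0 := hmax.hasDerivAt_eq_zero hder
  have : S = -∑ i, Y i * d i := by linarith
  rw [this]; ring
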